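/- For all integers n, k ≥ 1, the number of flattened Catalan words of length n with exactly k runs of ascents equals the sum over j from 0 to k−1 of C(n−1, 2k−j−2) · C(2k−j−2, j), where C denotes the binomial coefficient. -/

import Mathlib

/-- `w : ℕ → ℕ` encodes a Catalan word of length `n` (0-indexed letters
`w 0, w 1, …, w (n-1)`): the first letter is `0`, each letter is at most the
previous one plus one, and `w` is normalized to vanish at positions `≥ n`. -/
def IsCatalanWord (n : ℕ) (w : ℕ → ℕ) : Prop :=
  w 0 = 0 ∧ (∀ i, i + 1 < n → w (i + 1) ≤ w i + 1) ∧ ∀ i, n ≤ i → w i = 0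

/-- `j` is the starting position of one of the maximal weakly increasing
contiguous subwords (runs of weak ascents) of the length-`n` word `w`. -/
def IsRunStart (n : ℕ) (w : ℕ → ℕ) (j : ℕ) : Prop :=
  j < n ∧ (j = 0 ∨ w j < w (j - 1))

/-- A word is flattened when the leading terms of its maximal weakly increasing
contiguous subwords, read from left to right, form a weakly increasing sequence. -/
def IsFlattened (n : ℕ) (w : ℕ → ℕ) : Prop :=
  ∀ i j, IsRunStart n w i → IsRunStart n w j → i ≤ j → w i ≤ w j

/-- The set of flattened Catalan words of length `n`. -/
def FlatCat (n : ℕ) : Set (ℕ → ℕ) := {w | IsCatalanWord n w ∧ IsFlattened n w}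

/-- Number of maximal strictly increasing contiguous subwords (runs of ascents):
`1 + #{ i : w_i ≥ w_{i+1} }`. -/
noncomputable def runsAsc (n : ℕ) (w : ℕ → ℕ) : ℕ :=
  1 + {i : ℕ | i + 1 < n ∧ w (i + 1) ≤ w i}.ncard

/-- Number of maximal weakly increasing contiguous subwords (runs of weak
ascents): `1 + #{ i : w_i > w_{i+1} }`. -/
noncomputable def wruns (n : ℕ) (w : ℕ → ℕ) : ℕ :=
  1 + {i : ℕ | i + 1 < n ∧ w (i + 1) < w i}.ncard

/-- Number of maximal strictly decreasing contiguous subwords (runs of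
descents): `1 + #{ i : w_i ≤ w_{i+1} }`. -/
noncomputable def runsDesc (n : ℕ) (w : ℕ → ℕ) : ℕ :=
  1 + {i : ℕ | i + 1 < n ∧ w i ≤ w (i + 1)}.ncard

/-- Number of maximal weakly decreasing contiguous subwords (runs of weak
descents): `1 + #{ i : w_i < w_{i+1} }`. -/
noncomputable def wrunsDesc (n : ℕ) (w : ℕ → ℕ) : ℕ :=
  1 + {i : ℕ | i + 1 < n ∧ w i < w (i + 1)}.ncard

/-- An `ℓ`-valley `a b^ℓ (b+1)` (with `a > b`) occurring at position `i` of the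
length-`n` word `w`. -/
def IsLValley (n : ℕ) (w : ℕ → ℕ) (ℓ i : ℕ) : Prop :=
  i + ℓ + 1 < n ∧ w (i + 1) < w i ∧ (∀ t, 1 ≤ t → t ≤ ℓ → w (i + t) = w (i + 1)) ∧
    w (i + ℓ + 1) = w (i + 1) + 1

/-- Number of `ℓ`-valleys of `w`. -/
noncomputable def lValleyCount (n : ℕ) (w : ℕ → ℕ) (ℓ : ℕ) : ℕ :=
  {i : ℕ | IsLValley n w ℓ i}.ncard

/-- Number of valleys of `w` (all `ℓ`-valleys, `ℓ ≥ 1`). -/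
noncomputable def valleyCount (n : ℕ) (w : ℕ → ℕ) : ℕ :=
  {p : ℕ × ℕ | 1 ≤ p.2 ∧ IsLValley n w p.2 p.1}.ncard

/-- A symmetric valley `a (a-1)^ℓ a` (with `ℓ ≥ 1`) occurring at position `i`. -/
def IsSymValley (n : ℕ) (w : ℕ → ℕ) (ℓ i : ℕ) : Prop :=
  i + ℓ + 1 < n ∧ w i = w (i + 1) + 1 ∧ (∀ t, 1 ≤ t → t ≤ ℓ → w (i + t) = w (i + 1)) ∧
    w (i + ℓ + 1) = w i

/-- Number of symmetric valleys of `w` (over all `ℓ ≥ 1`). -/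
noncomputable def symValleyCount (n : ℕ) (w : ℕ → ℕ) : ℕ :=
  {p : ℕ × ℕ | 1 ≤ p.2 ∧ IsSymValley n w p.2 p.1}.ncard

/-- An `ℓ`-peak `a (a+1)^ℓ b` (with `a ≥ b`) occurring at position `i` of the
length-`n` word `w`. -/
def IsLPeak (n : ℕ) (w : ℕ → ℕ) (ℓ i : ℕ) : Prop :=
  i + ℓ + 1 < n ∧ (∀ t, 1 ≤ t → t ≤ ℓ → w (i + t) = w i + 1) ∧ w (i + ℓ + 1) ≤ w i

/-- Number of `ℓ`-peaks of `w`. -/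
noncomputable def lPeakCount (n : ℕ) (w : ℕ → ℕ) (ℓ : ℕ) : ℕ :=
  {i : ℕ | IsLPeak n w ℓ i}.ncard

/-- Number of peaks of `w` (all `ℓ`-peaks, `ℓ ≥ 1`). -/
noncomputable def peakCount (n : ℕ) (w : ℕ → ℕ) : ℕ :=
  {p : ℕ × ℕ | 1 ≤ p.2 ∧ IsLPeak n w p.2 p.1}.ncard

/-- A symmetric peak `a (a+1)^ℓ a` (with `ℓ ≥ 1`) occurring at position `i`. -/
def IsSymPeak (n : ℕ) (w : ℕ → ℕ) (ℓ i : ℕ) : Prop :=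
  i + ℓ + 1 < n ∧ (∀ t, 1 ≤ t → t ≤ ℓ → w (i + t) = w i + 1) ∧ w (i + ℓ + 1) = w i

/-- Number of symmetric peaks of `w` (over all `ℓ ≥ 1`). -/
noncomputable def symPeakCount (n : ℕ) (w : ℕ → ℕ) : ℕ :=
  {p : ℕ × ℕ | 1 ≤ p.2 ∧ IsSymPeak n w p.2 p.1}.ncard

/-- Value of the leading term of the last weakly increasing run of `w 0 … w N`. -/
def lastStart (w : ℕ → ℕ) : ℕ → ℕ
  | 0 => w 0
  | N + 1 => if w (N + 1) < w N then w (N + 1) else lastStart w N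

/-- Number of weak descents. -/
def wdesc (w : ℕ → ℕ) (N : ℕ) : ℕ :=
  ((Finset.range N).filter (fun i => w (i + 1) ≤ w i)).card

/-- Recursive enumeration of the flattened words of length `N + 1`. -/
noncomputable def flatWords : ℕ → Finset (ℕ → ℕ)
  | 0 => {fun _ => 0}
  | N + 1 => by
    classical
    exact (flatWords N).biUnion (fun w =>
      (Finset.Icc (lastStart w N) (w N + 1)).image (fun v => Function.update w (N + 1) v))

/-- Local characterisation of flattened words. -/
def Loc (N : ℕ) (w : ℕ → ℕ) : Prop :=
  w 0 = 0 ∧ (∀ i, i < N → lastStart w i ≤ w (i + 1) ∧ w (i + 1) ≤ w i + 1) ∧ ∀ i, N < i → w i = 0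

theorem lastStart_le (w : ℕ → ℕ) (N : ℕ) : lastStart w N ≤ w N := by
  induction N with
  | zero => simp [lastStart]
  | succ N ih => simp only [lastStart]; split_ifs <;> omega

theorem lastStart_congr (w w' : ℕ → ℕ) (N : ℕ) (h : ∀ i ≤ N, w i = w' i) :
    lastStart w N = lastStart w' N := by
  induction N with
  | zero => simp [lastStart, h]
  | succ N ih =>
    simp only [lastStart]
    rw [ih (fun i hi => h i (by omega)), h N (by omega), h (N + 1) le_rfl]

theorem lastStart_update (w : ℕ → ℕ) (N v i : ℕ) (hi : i ≤ N) :
    lastStart (Function.update w (N + 1) v) i = lastStart w i := by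
  apply lastStart_congr
  intro j hj
  rw [Function.update_of_ne (by omega)]

theorem wdesc_succ (w : ℕ → ℕ) (N : ℕ) :
    wdesc w (N + 1) = wdesc w N + if w (N + 1) ≤ w N then 1 else 0 := by
  unfold wdesc
  rw [Finset.range_add_one, Finset.filter_insert]
  split_ifs <;> simp

theorem wdesc_update (w : ℕ → ℕ) (N v : ℕ) :
    wdesc (Function.update w (N + 1) v) N = wdesc w N := by
  unfold wdesc
  congr 1
  apply Finset.filter_congr
  intro i hi
  rw [Finset.mem_range] at hi
  rw [Function.update_of_ne (by omega), Function.update_of_ne (by omega)]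

theorem mem_flatWords (N : ℕ) (w : ℕ → ℕ) : w ∈ flatWords N ↔ Loc N w := by
  induction N generalizing w with
  | zero =>
    simp only [flatWords, Finset.mem_singleton, Loc]
    constructor
    · rintro rfl; simp
    · rintro ⟨h0, -, h⟩
      funext i
      rcases Nat.eq_zero_or_pos i with rfl | hi
      · exact h0
      · exact h i hi
  | succ N ih =>
    simp only [flatWords, Finset.mem_biUnion, Finset.mem_image, Finset.mem_Icc]
    constructor
    · rintro ⟨u, hu, v, hv, rfl⟩
      rw [ih] at hu
      obtain ⟨h0, h1, h2⟩ := hu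
      refine ⟨by rw [Function.update_of_ne (by omega)]; exact h0, ?_, ?_⟩
      · intro i hi
        rw [lastStart_update _ _ _ _ (by omega), Function.update_of_ne (a := i) (by omega)]
        by_cases hN : i = N
        · subst hN; simpa using hv
        · rw [Function.update_of_ne (by omega)]
          exact h1 i (by omega)
      · intro i hi
        rw [Function.update_of_ne (by omega)]
        exact h2 i (by omega)
    · rintro ⟨h0, h1, h2⟩
      refine ⟨Function.update w (N + 1) 0, ?_, w (N + 1), ?_, by simp⟩
      · rw [ih]
        refine ⟨by rw [Function.update_of_ne (by omega)]; exact h0, ?_, ?_⟩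
        · intro i hi
          rw [lastStart_update _ _ _ _ (by omega), Function.update_of_ne (by omega),
            Function.update_of_ne (by omega)]
          exact h1 i (by omega)
        · intro i hi
          by_cases hN : i = N + 1
          · subst hN; simp
          · rw [Function.update_of_ne hN]; exact h2 i (by omega)
      · rw [lastStart_update _ _ _ _ le_rfl, Function.update_of_ne (by omega)]
        exact h1 N (by omega)

theorem exists_lastStart (w : ℕ → ℕ) (n N : ℕ) (hN : N < n) :
    ∃ j ≤ N, IsRunStart n w j ∧ w j = lastStart w N := by
  induction N with
  | zero => exact ⟨0, le_rfl, ⟨hN, Or.inl rfl⟩, rfl⟩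
  | succ N ih =>
    simp only [lastStart]
    split_ifs with h
    · exact ⟨N + 1, le_rfl, ⟨hN, Or.inr (by simpa using h)⟩, rfl⟩
    · obtain ⟨j, hj, h1, h2⟩ := ih (by omega)
      exact ⟨j, by omega, h1, h2⟩

theorem lastStart_of_runStart (w : ℕ → ℕ) (n i : ℕ) (h : IsRunStart n w i) :
    lastStart w i = w i := by
  cases i with
  | zero => rfl
  | succ i =>
    have : w (i + 1) < w i := by simpa using h.2
    simp [lastStart, this]

theorem loc_iff (N : ℕ) (w : ℕ → ℕ) : Loc N w ↔ w ∈ FlatCat (N + 1) := by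
  constructor
  · rintro ⟨h0, h1, h2⟩
    refine ⟨⟨h0, fun i hi => (h1 i (by omega)).2, fun i hi => h2 i (by omega)⟩, ?_⟩
    intro i j hi hj hij
    rw [← lastStart_of_runStart w _ i hi, ← lastStart_of_runStart w _ j hj]
    have hjN := hj.1
    clear hj
    induction j, hij using Nat.le_induction with
    | base => exact le_rfl
    | succ j hij ih =>
      refine (ih (by omega)).trans ?_
      simp only [lastStart]
      split_ifs
      · exact (h1 j (by omega)).1
      · exact le_rfl
  · rintro ⟨⟨h0, h1, h2⟩, h3⟩
    refine ⟨h0, fun i hi => ⟨?_, h1 i (by omega)⟩, fun i hi => h2 i (by omega)⟩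
    by_cases h : w (i + 1) < w i
    · obtain ⟨j, hj, hr, he⟩ := exists_lastStart w (N + 1) i (by omega)
      rw [← he]
      exact h3 j (i + 1) hr ⟨by omega, Or.inr (by simpa using h)⟩ (by omega)
    · exact (lastStart_le w i).trans (by omega)

theorem runsAsc_eq (N : ℕ) (w : ℕ → ℕ) : runsAsc (N + 1) w = 1 + wdesc w N := by
  unfold runsAsc wdesc
  rw [← Set.ncard_coe_finset]
  congr 2
  ext i
  simp

open Polynomial in
/-- Weight of a word. -/
noncomputable def wt (N : ℕ) (w : ℕ → ℕ) : ℕ[X] :=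
  X ^ (2 * wdesc w N) * (1 + C (w N - lastStart w N) * X)

open Polynomial in
theorem wt_update (N : ℕ) (w : ℕ → ℕ) (v : ℕ) :
    wt (N + 1) (Function.update w (N + 1) v) =
      X ^ (2 * wdesc w N) * (if v ≤ w N then X ^ 2 else 1) *
        (1 + C (if v < w N then 0 else v - lastStart w N) * X) := by
  unfold wt
  rw [wdesc_succ, wdesc_update]
  simp only [lastStart]
  rw [lastStart_update _ _ _ _ le_rfl, Function.update_self, Function.update_of_ne (by omega)]
  congr 1
  · split_ifs
    · ring
    · simp
  · split_ifs <;> simp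

open Polynomial in
theorem sum_wt_update (N : ℕ) (w : ℕ → ℕ) :
    ∑ v ∈ Finset.Icc (lastStart w N) (w N + 1), wt (N + 1) (Function.update w (N + 1) v) =
      wt N w * (1 + X + X ^ 2) := by
  simp only [wt_update]
  have hle := lastStart_le w N
  unfold wt
  generalize lastStart w N = b at *
  generalize wdesc w N = c at *
  generalize w N = a at *
  obtain ⟨d, rfl⟩ := Nat.exists_eq_add_of_le hle
  rw [← Finset.Ico_add_one_right_eq_Icc, Finset.sum_Ico_succ_top (by omega),
    Finset.sum_Ico_succ_top (by omega)]
  have : ∀ v ∈ Finset.Ico b (b + d), (X : ℕ[X]) ^ (2 * c) * (if v ≤ b + d then X ^ 2 else 1) *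
        (1 + C (if v < b + d then 0 else v - b) * X) = X ^ (2 * c) * X ^ 2 := by
    intro v hv
    rw [Finset.mem_Ico] at hv
    rw [if_pos (by omega), if_pos (by omega)]
    simp
  rw [Finset.sum_congr rfl this]
  have e1 : b + d + 1 - b = d + 1 := by omega
  simp [e1]
  ring

open Polynomial in
theorem sum_wt (N : ℕ) : ∑ w ∈ flatWords N, wt N w = (1 + X + X ^ 2 : ℕ[X]) ^ N := by
  classical
  induction N with
  | zero => simp [flatWords, wt, wdesc, lastStart]
  | succ N ih =>
    have key : ∑ w ∈ flatWords (N + 1), wt (N + 1) w = ∑ w ∈ flatWords N,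
        ∑ v ∈ Finset.Icc (lastStart w N) (w N + 1), wt (N + 1) (Function.update w (N + 1) v) := by
      have : flatWords (N + 1) = (flatWords N).biUnion (fun w =>
        (Finset.Icc (lastStart w N) (w N + 1)).image
          (fun v => Function.update w (N + 1) v)) := by
        simp only [flatWords]
      rw [this, Finset.sum_biUnion]
      · refine Finset.sum_congr rfl fun w _ => ?_
        rw [Finset.sum_image]
        intro v _ v' _ h
        exact Function.update_injective w (N + 1) h
      · intro w hw w' hw' hne
        rw [Function.onFun, Finset.disjoint_left]
        intro u hu hu'
        simp only [Finset.mem_image] at hu hu'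
        obtain ⟨v, -, rfl⟩ := hu
        obtain ⟨v', -, h⟩ := hu'
        apply hne
        rw [Finset.mem_coe, mem_flatWords] at hw hw'
        funext i
        by_cases hi : i = N + 1
        · subst hi
          rw [hw.2.2 _ (by omega), hw'.2.2 _ (by omega)]
        · have := congrFun h i
          rw [Function.update_of_ne hi, Function.update_of_ne hi] at this
          exact this.symm
    rw [key, Finset.sum_congr rfl (fun w _ => sum_wt_update N w), ← Finset.sum_mul, ih, ← pow_succ]

open Polynomial in
theorem coeff_wt (N m : ℕ) (w : ℕ → ℕ) :
    (wt N w).coeff (2 * m) = if wdesc w N = m then 1 else 0 := by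
  unfold wt
  rw [coeff_X_pow_mul']
  by_cases h : wdesc w N = m
  · subst h; simp
  · rw [if_neg h]
    split_ifs with h2
    · obtain ⟨t, ht⟩ : ∃ t, 2 * m - 2 * wdesc w N = (2 * t + 1) + 1 :=
        ⟨m - wdesc w N - 1, by omega⟩
      rw [ht, coeff_add, coeff_C_mul, coeff_X, coeff_one, if_neg (by omega), if_neg (by omega)]
      simp
    · rfl

open Polynomial in
theorem coeff_tri (N m : ℕ) : ((1 + X + X ^ 2 : ℕ[X]) ^ N).coeff (2 * m) =
    ∑ j ∈ Finset.range (m + 1), Nat.choose N (2 * m - j) * Nat.choose (2 * m - j) j := by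
  have e : (1 + X + X ^ 2 : ℕ[X]) = X * (1 + X) + 1 := by ring
  rw [e, add_pow, finsetSum_coeff]
  have h1 : ∀ i ∈ Finset.range (N + 1),
      ((X * (1 + X) : ℕ[X]) ^ i * 1 ^ (N - i) * (N.choose i : ℕ[X])).coeff (2 * m) =
      if i ≤ 2 * m then N.choose i * i.choose (2 * m - i) else 0 := by
    intro i _
    rw [one_pow, mul_one, coeff_mul_natCast, mul_pow, coeff_X_pow_mul']
    split_ifs
    · rw [coeff_one_add_X_pow, mul_comm]; simp
    · simp
  rw [Finset.sum_congr rfl h1, ← Finset.sum_filter]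
  have h2 : ∑ j ∈ Finset.range (m + 1), Nat.choose N (2 * m - j) * Nat.choose (2 * m - j) j =
      ∑ j ∈ Finset.range (2 * m + 1), Nat.choose N (2 * m - j) * Nat.choose (2 * m - j) j := by
    apply Finset.sum_subset
    · intro j; simp only [Finset.mem_range]; omega
    · intro j hj hj'
      simp only [Finset.mem_range] at hj hj'
      rw [Nat.choose_eq_zero_of_lt (n := 2 * m - j) (k := j) (by omega), mul_zero]
  rw [h2, ← Finset.sum_range_reflect]
  have h3 : ∑ j ∈ Finset.range (2 * m + 1),
      N.choose (2 * m - (2 * m + 1 - 1 - j)) *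
        (2 * m - (2 * m + 1 - 1 - j)).choose (2 * m + 1 - 1 - j) =
      ∑ j ∈ Finset.range (2 * m + 1), N.choose j * j.choose (2 * m - j) := by
    refine Finset.sum_congr rfl fun j hj => ?_
    rw [Finset.mem_range] at hj
    have e1 : 2 * m + 1 - 1 - j = 2 * m - j := by omega
    have e2 : 2 * m - (2 * m - j) = j := by omega
    rw [e1, e2]
  rw [h3]
  apply Finset.sum_subset
  · intro j; simp only [Finset.mem_range, Finset.mem_filter]; omega
  · intro j hj hj'
    simp only [Finset.mem_range, Finset.mem_filter] at hj hj'
    rw [Nat.choose_eq_zero_of_lt (n := N) (k := j) (by omega), zero_mul]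

/-- For all `n, k ≥ 1`, the number of flattened Catalan words of length `n`
with exactly `k` runs of ascents equals
`∑_{j=0}^{k-1} C(n-1, 2k-j-2) * C(2k-j-2, j)`. -/
theorem flatCat_runsAsc_card (n k : ℕ) (hn : 1 ≤ n) (hk : 1 ≤ k) :
    {w ∈ FlatCat n | runsAsc n w = k}.ncard =
      ∑ j ∈ Finset.range k,
        Nat.choose (n - 1) (2 * k - j - 2) * Nat.choose (2 * k - j - 2) j := by
  obtain ⟨N, rfl⟩ := Nat.exists_eq_add_of_le' hn
  obtain ⟨m, rfl⟩ := Nat.exists_eq_add_of_le' hk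
  have hset : {w ∈ FlatCat (N + 1) | runsAsc (N + 1) w = m + 1} =
      ((flatWords N).filter (fun w => wdesc w N = m) : Finset (ℕ → ℕ)) := by
    ext w
    simp only [Set.mem_setOf_eq, Finset.coe_filter, mem_flatWords, loc_iff, runsAsc_eq]
    refine and_congr_right fun _ => ?_
    omega
  rw [hset, Set.ncard_coe_finset, Finset.card_filter]
  have h := coeff_tri N m
  rw [← sum_wt, Polynomial.finsetSum_coeff] at h
  simp only [coeff_wt] at h
  rw [h]
  refine Finset.sum_congr rfl fun j _ => ?_
  have e : 2 * (m + 1) - j - 2 = 2 * m - j := by omega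
  rw [e, Nat.add_sub_cancel]
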